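/- arXiv:1902.08886 — 5 statements merged into one kernel-verified Lean document; each statement's English description precedes it below -/
import Mathlib

section
/- Let S be a nonempty finite set with probabilities p : S → ℝ, p s ≥ 0 and Σ_s p s = 1, let α ∈ (0,1], let Π be a nonempty set and let f : Π → S → ℝ. Then inf { y ∈ ℝ : ∃ π ∈ Π, ∃ z : S → {0,1}, Σ_s p s · z s ≥ α and (∀ s, z s = 1 → f π s ≤ y) } = inf over all π ∈ Π and all z : S → {0,1} with Σ_s p s · z s ≥ α of max_{s ∈ S with z s = 1 and p s > 0} f π s. (Hence the quantile-minimizing MDP problem equals min over scenario selections z and policies π of the robust value max_{s ∈ S(z)} C(π, c^s, P^s).) -/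
/-!
Write `A` for the set of feasible levels `y` and `B` for the set of robust values. Deselecting the
scenarios of probability zero keeps a selection `z` feasible, so every robust value is a feasible
level: `B ⊆ A`. Conversely, a level `y` feasible for `(π, z)` bounds the robust value of `(π, z)`,
so every element of `A` lies above an element of `B`. Hence `A` and `B` have the same lower bounds
and the same infimum (`sInf_eq_of_subset_of_forall_exists_le`).
-/

/-- No boundedness is needed: both sets have the same lower bounds, so if one is unbounded below
then so is the other, and both infima take the default value `0`. -/
lemma sInf_eq_of_subset_of_forall_exists_le {A B : Set ℝ} (hBA : B ⊆ A)
    (hAB : ∀ y ∈ A, ∃ m ∈ B, m ≤ y) : sInf A = sInf B := by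
  have hlb : lowerBounds A = lowerBounds B := by
    refine Set.Subset.antisymm (lowerBounds_mono_set hBA) fun b hb y hy => ?_
    obtain ⟨m, hm, hmy⟩ := hAB y hy
    exact (hb hm).trans hmy
  rcases B.eq_empty_or_nonempty with hB | hB
  · have hA : A = ∅ := by
      refine Set.eq_empty_of_forall_notMem fun y hy => ?_
      obtain ⟨m, hm, -⟩ := hAB y hy
      simp [hB] at hm
    rw [hA, hB]
  by_cases hbd : BddBelow B
  · have hglb : IsGLB B (sInf B) := isGLB_csInf hB hbd
    refine IsGLB.csInf_eq ?_ (hB.mono hBA)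
    rwa [IsGLB, hlb]
  · have hbdA : ¬ BddBelow A := fun h => hbd (h.mono hBA)
    rw [Real.sInf_of_not_bddBelow hbd, Real.sInf_of_not_bddBelow hbdA]

/-- The quantile-minimizing problem, written with binary scenario
selection variables, equals the min over scenario selections `z` and policies `π`
of the robust value `max_{s ∈ S(z), p s > 0} f π s`. -/
theorem stmt_13 {S : Type*} [Fintype S] [Nonempty S] {Pol : Type*} [Nonempty Pol]
    (p : S → ℝ) (hp : ∀ s, 0 ≤ p s) (hp1 : ∑ s, p s = 1)
    (α : ℝ) (hα0 : 0 < α) (hα1 : α ≤ 1)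
    (f : Pol → S → ℝ) :
    sInf {y : ℝ | ∃ (π : Pol) (z : S → ℝ), (∀ s, z s = 0 ∨ z s = 1) ∧
        α ≤ ∑ s, p s * z s ∧ ∀ s, z s = 1 → f π s ≤ y} =
    sInf {m : ℝ | ∃ (π : Pol) (z : S → ℝ), (∀ s, z s = 0 ∨ z s = 1) ∧
        α ≤ ∑ s, p s * z s ∧
        m = sSup {x : ℝ | ∃ s, z s = 1 ∧ 0 < p s ∧ x = f π s}} := by
  classical
  apply sInf_eq_of_subset_of_forall_exists_le
  · rintro m ⟨π, z, hz, hsum, rfl⟩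
    refine ⟨π, fun s => if 0 < p s then z s else 0, fun s => ?_, ?_, fun s hs => ?_⟩
    · by_cases h : 0 < p s
      · simpa [h] using hz s
      · simp [h]
    · refine hsum.trans (Finset.sum_le_sum fun s _ => ?_)
      by_cases h : 0 < p s
      · simp [h]
      · simp [le_antisymm (not_lt.mp h) (hp s)]
    · have h : 0 < p s := by
        by_contra h
        simp [h] at hs
      have hzs : z s = 1 := by simpa [h] using hs
      refine le_csSup ((Set.finite_range (f π)).subset ?_).bddAbove ⟨s, hzs, h, rfl⟩
      rintro x ⟨t, -, -, rfl⟩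
      exact ⟨t, rfl⟩
  · rintro y ⟨π, z, hz, hsum, hy⟩
    refine ⟨_, ⟨π, z, hz, hsum, rfl⟩, csSup_le ?_ ?_⟩
    · -- the selection has positive total probability, hence a selected scenario with `0 < p s`
      obtain ⟨s, -, hs⟩ := Finset.exists_lt_of_sum_lt (s := Finset.univ) (f := fun _ : S => (0 : ℝ))
        (g := fun s => p s * z s) (by simpa using hα0.trans_le hsum)
      rcases hz s with h | h
      · simp [h] at hs
      · exact ⟨_, s, h, by simpa [h] using hs, rfl⟩
    · rintro x ⟨s, hzs, -, rfl⟩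
      exact hy s hzs
end

section
/- Let S be a nonempty finite set with probabilities p : S → ℝ, p s ≥ 0 and Σ_s p s = 1, let α ∈ (0,1], and let X : S → ℝ. For any z : S → {0,1} with Σ_s p s · z s ≥ α, we have VaR_α(X) ≤ max_{s ∈ S with z s = 1 and p s > 0} X s. (Hence, for any scenario selection z satisfying the probability requirement, the policy returned by the robust subproblem rMDP(z), together with its objective value, is a feasible solution of the quantile-minimizing problem.) -/
/-! The maximum `M` of `X` over the selected scenarios of positive probability lies in the set whose
infimum is `VaR`: each selected scenario of positive probability has `X s ≤ M`, so the mass of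
`{X ≤ M}` is at least `∑ p s * z s ≥ α`. That set is bounded below by `min X`, since no mass lies
below it and `α > 0`; hence the real infimum is not a junk value and is at most `M`. -/

/-- Value-at-risk at confidence level `α` of a random variable `X` on a finite
scenario space with probabilities `p`. -/
noncomputable def VaR {S : Type*} [Fintype S] (p : S → ℝ) (α : ℝ) (X : S → ℝ) : ℝ :=
  sInf {t : ℝ | α ≤ ∑ s, if X s ≤ t then p s else 0}

/-- For any binary scenario selection `z` with `Σ_s p s z s ≥ α`,
`VaR_α(X) ≤ max_{s : z s = 1, p s > 0} X s`. -/
theorem stmt_14 {S : Type*} [Fintype S] [Nonempty S]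
    (p : S → ℝ) (hp : ∀ s, 0 ≤ p s) (hp1 : ∑ s, p s = 1)
    (α : ℝ) (hα0 : 0 < α) (hα1 : α ≤ 1)
    (X : S → ℝ) (z : S → ℝ)
    (hz : ∀ s, z s = 0 ∨ z s = 1) (hzα : α ≤ ∑ s, p s * z s) :
    VaR p α X ≤ sSup {x : ℝ | ∃ s, z s = 1 ∧ 0 < p s ∧ x = X s} := by
  have hbdd : BddAbove {x : ℝ | ∃ s, z s = 1 ∧ 0 < p s ∧ x = X s} := by
    refine (Set.finite_range X).bddAbove.mono ?_
    rintro x ⟨s, -, -, rfl⟩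
    exact Set.mem_range_self s
  unfold VaR
  refine csInf_le ?_ ?_
  · obtain ⟨m, hm⟩ := Finite.exists_min X
    refine ⟨X m, fun t ht => ?_⟩
    by_contra! hlt
    have h0 : ∑ s, (if X s ≤ t then p s else 0) = 0 :=
      Finset.sum_eq_zero fun s _ => if_neg (not_le.mpr (hlt.trans_le (hm s)))
    rw [Set.mem_setOf_eq, h0] at ht
    exact absurd ht (not_le.mpr hα0)
  · refine hzα.trans (Finset.sum_le_sum fun s _ => ?_)
    rcases hz s with h | h
    · rw [h, mul_zero]
      split_ifs
      exacts [hp s, le_rfl]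
    · rw [h, mul_one]
      rcases (hp s).eq_or_lt with h0 | h0
      · simp [← h0]
      · rw [if_pos (le_csSup hbdd ⟨s, h, h0, rfl⟩)]
end

section
/- Consider a single-state infinite-horizon MDP with two actions a and b, discount factor γ ∈ [0,1), and two scenarios with probabilities p₁ = p₂ = 1/2: under scenario 1 the per-period costs are c(a) = 0 and c(b) = 2, and under scenario 2 they are c(a) = 2 and c(b) = 0. The value of a randomized stationary policy selecting a with probability w and b with probability 1 − w is (2(1−w))/(1−γ) under scenario 1 and (2w)/(1−γ) under scenario 2. At confidence level α = 0.9: every deterministic stationary policy (w = 0 or w = 1) has VaR_{0.9} of the expected total discounted cost equal to 2/(1−γ), whereas the randomized policy with w = 1/2 has VaR_{0.9} equal to 1/(1−γ) < 2/(1−γ). Consequently, no deterministic stationary policy is optimal for the quantile-minimizing MDP problem on this instance. -/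
/-- With two equally likely scenarios, covering probability `0.9` requires both of them, so the
set of thresholds defining the value-at-risk is the ray starting at the larger value. -/
lemma VaR_two_point (p : Fin 2 → ℝ) (hp : ∀ s, p s = 1 / 2) (X : Fin 2 → ℝ) :
    VaR p 0.9 X = max (X 0) (X 1) := by
  have hset : {t : ℝ | (0.9 : ℝ) ≤ ∑ s, if X s ≤ t then p s else 0} =
      Set.Ici (max (X 0) (X 1)) := by
    ext t
    simp only [Set.mem_ofPred_eq, Fin.sum_univ_two, hp, Set.mem_Ici, max_le_iff]
    by_cases h0 : X 0 ≤ t <;> by_cases h1 : X 1 ≤ t <;> simp only [h0, h1, if_true, if_false] <;>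
      norm_num
  rw [VaR, hset, csInf_Ici]

/-- Example 1: single-state MDP, two actions, two equally likely
scenarios with costs `(c(a), c(b)) = (0,2)` in scenario 1 and `(2,0)` in
scenario 2. The value of the randomized policy choosing `a` with probability `w`
is `2(1-w)/(1-γ)` in scenario 1 and `2w/(1-γ)` in scenario 2 (sum of the
discounted per-period costs). At `α = 0.9`, both deterministic policies have
VaR `2/(1-γ)` while the policy `w = 1/2` has VaR `1/(1-γ) < 2/(1-γ)`; hence no
deterministic stationary policy is optimal. -/
theorem stmt_17 (γ : ℝ) (hγ0 : 0 ≤ γ) (hγ1 : γ < 1)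
    (p : Fin 2 → ℝ) (hp : ∀ s, p s = 1 / 2)
    (V : ℝ → Fin 2 → ℝ)
    (hV : ∀ w : ℝ, V w 0 = 2 * (1 - w) / (1 - γ) ∧ V w 1 = 2 * w / (1 - γ)) :
    (∀ w : ℝ, (∑' t : ℕ, γ ^ t * (2 * (1 - w))) = 2 * (1 - w) / (1 - γ) ∧
              (∑' t : ℕ, γ ^ t * (2 * w)) = 2 * w / (1 - γ)) ∧
    VaR p 0.9 (V 0) = 2 / (1 - γ) ∧
    VaR p 0.9 (V 1) = 2 / (1 - γ) ∧
    VaR p 0.9 (V (1 / 2)) = 1 / (1 - γ) ∧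
    1 / (1 - γ) < 2 / (1 - γ) := by
  have hpos : 0 < 1 - γ := sub_pos.mpr hγ1
  have hgeom : ∀ κ : ℝ, (∑' t : ℕ, γ ^ t * κ) = κ / (1 - γ) := fun κ => by
    rw [tsum_mul_right, tsum_geometric_of_lt_one hγ0 hγ1, div_eq_mul_inv, mul_comm]
  have hnonneg : 0 ≤ 2 / (1 - γ) := by positivity
  refine ⟨fun w => ⟨hgeom _, hgeom _⟩, ?_, ?_, ?_, ?_⟩
  · rw [VaR_two_point p hp, (hV 0).1, (hV 0).2]
    simpa using hnonneg
  · rw [VaR_two_point p hp, (hV 1).1, (hV 1).2]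
    simpa using hnonneg
  · rw [VaR_two_point p hp, (hV (1 / 2)).1, (hV (1 / 2)).2]
    norm_num
  · gcongr
    norm_num
end

section
/- (Proposition 1.) Fix nonempty finite sets H (states), A (actions) and S (scenarios), probabilities p : S → ℝ with p s > 0 and Σ_s p s = 1, a confidence level α ∈ (0,1], a discount factor γ ∈ [0,1), an initial distribution q : H → ℝ with q i ≥ 0 and Σ_i q i = 1, and for each scenario s costs c^s : H → A → ℝ and kernels P^s : A → H → H → ℝ with each P^s a row-stochastic. For a randomized stationary policy w, let v^s(w) : H → ℝ denote the unique solution of v i = Σ_a w i a · c^s i a + γ Σ_a Σ_j w i a · P^s a i j · v j. Let v̄^s and v̲^s be the fixed points of the max- and min-Bellman operators of scenario s, and suppose M ≥ max_s Σ_i q i · v̄^s i − min_s Σ_i q i · v̲^s i. Then the optimal value of the chance-constrained problem inf over randomized policies w of VaR_α( s ↦ Σ_i q i · v^s(w) i ) equals the optimal value of the mixed-integer program QMDP-R: inf of y over all (y ∈ ℝ, randomized policies w, z : S → {0,1}, v : S → H → ℝ) such that Σ_s p s · z s ≥ α; Σ_i q i · v^s i ≤ y + (1 − z s)·M for all s;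 and v^s i ≥ Σ_a w i a · c^s i a + γ Σ_a Σ_j w i a · P^s a i j · v^s j for all i, s. -/
/-- Comparison principle for policy evaluation: a subsolution `l` lies below a supersolution `u`.
At a state minimizing `u - l`, the minimum `m` satisfies `γ * m ≤ m`, hence `0 ≤ m`. -/
lemma sub_le_super {H A : Type*} [Fintype H] [Nonempty H] [Fintype A]
    (γ : ℝ) (hγ0 : 0 ≤ γ) (hγ1 : γ < 1)
    (c : H → A → ℝ) (P : A → H → H → ℝ)
    (hPnn : ∀ a i j, 0 ≤ P a i j) (hProw : ∀ a i, ∑ j, P a i j = 1)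
    (w : H → A → ℝ) (hw : ∀ i a, 0 ≤ w i a) (hw1 : ∀ i, ∑ a, w i a = 1)
    (l u : H → ℝ)
    (hl : ∀ i, l i ≤ ∑ a, w i a * c i a + γ * ∑ a, ∑ j, w i a * P a i j * l j)
    (hu : ∀ i, ∑ a, w i a * c i a + γ * ∑ a, ∑ j, w i a * P a i j * u j ≤ u i) (i : H) :
    l i ≤ u i := by
  obtain ⟨k, hk⟩ := Finite.exists_min (fun i => u i - l i)
  have key : ∑ a, ∑ j, w k a * P a k j * (u k - l k) ≤
      ∑ a, ∑ j, w k a * P a k j * u j - ∑ a, ∑ j, w k a * P a k j * l j := by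
    rw [← Finset.sum_sub_distrib]
    refine Finset.sum_le_sum fun a _ => ?_
    rw [← Finset.sum_sub_distrib]
    refine Finset.sum_le_sum fun j _ => ?_
    rw [← mul_sub]
    exact mul_le_mul_of_nonneg_left (hk j) (mul_nonneg (hw k a) (hPnn a k j))
  have hsum : ∑ a, ∑ j, w k a * P a k j * (u k - l k) = u k - l k := by
    simp_rw [← Finset.sum_mul, ← Finset.mul_sum, hProw, mul_one, hw1, one_mul]
  rw [hsum] at key
  have h1 := mul_le_mul_of_nonneg_left key hγ0
  have h2 := hl k
  have h3 := hu k
  have h4 : 0 ≤ u k - l k := by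
    by_contra hneg
    nlinarith
  linarith [hk i]

/-- The policy-evaluation operator is the `w`-average of the one-step operators of the actions. -/
lemma policy_eval_eq {H A : Type*} [Fintype H] [Fintype A] (γ : ℝ)
    (c : H → A → ℝ) (P : A → H → H → ℝ) (w : H → A → ℝ) (v : H → ℝ) (i : H) :
    ∑ a, w i a * c i a + γ * ∑ a, ∑ j, w i a * P a i j * v j =
      ∑ a, w i a * (c i a + γ * ∑ j, P a i j * v j) := by
  rw [Finset.mul_sum, ← Finset.sum_add_distrib]
  refine Finset.sum_congr rfl fun a _ => ?_
  simp_rw [mul_assoc, ← Finset.mul_sum]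
  ring

/-- Proposition 1: assuming a finite representation of parameter
uncertainty, the chance-constrained quantile-minimizing problem over randomized
stationary policies equals the mixed-integer program QMDP-R. -/
theorem stmt_18 {H A S : Type*} [Fintype H] [Nonempty H] [Fintype A] [Nonempty A]
    [Fintype S] [Nonempty S]
    (p : S → ℝ) (hp : ∀ s, 0 < p s) (hp1 : ∑ s, p s = 1)
    (α : ℝ) (hα0 : 0 < α) (hα1 : α ≤ 1)
    (γ : ℝ) (hγ0 : 0 ≤ γ) (hγ1 : γ < 1)
    (q : H → ℝ) (hq : ∀ i, 0 ≤ q i) (hq1 : ∑ i, q i = 1)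
    (c : S → H → A → ℝ) (P : S → A → H → H → ℝ)
    (hPnn : ∀ s a i j, 0 ≤ P s a i j) (hProw : ∀ s a i, ∑ j, P s a i j = 1)
    -- the value function of a randomized stationary policy under each scenario
    (val : (H → A → ℝ) → S → H → ℝ)
    (hval : ∀ w : H → A → ℝ, (∀ i a, 0 ≤ w i a) → (∀ i, ∑ a, w i a = 1) →
      ∀ s i, val w s i =
        ∑ a, w i a * c s i a + γ * ∑ a, ∑ j, w i a * P s a i j * val w s j)
    -- fixed points of the max- and min-Bellman operators of each scenario
    (vbar vlow : S → H → ℝ)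
    (hvbar : ∀ s i, vbar s i = Finset.univ.sup' Finset.univ_nonempty fun a =>
        c s i a + γ * ∑ j, P s a i j * vbar s j)
    (hvlow : ∀ s i, vlow s i = Finset.univ.inf' Finset.univ_nonempty fun a =>
        c s i a + γ * ∑ j, P s a i j * vlow s j)
    (M : ℝ)
    (hM : (Finset.univ.sup' Finset.univ_nonempty fun s => ∑ i, q i * vbar s i) -
          (Finset.univ.inf' Finset.univ_nonempty fun s => ∑ i, q i * vlow s i) ≤ M) :
    sInf {y : ℝ | ∃ w : H → A → ℝ, (∀ i a, 0 ≤ w i a) ∧ (∀ i, ∑ a, w i a = 1) ∧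
        y = VaR p α fun s => ∑ i, q i * val w s i} =
    sInf {y : ℝ | ∃ (w : H → A → ℝ) (z : S → ℝ) (v : S → H → ℝ),
        (∀ i a, 0 ≤ w i a) ∧ (∀ i, ∑ a, w i a = 1) ∧
        (∀ s, z s = 0 ∨ z s = 1) ∧
        α ≤ ∑ s, p s * z s ∧
        (∀ s, ∑ i, q i * v s i ≤ y + (1 - z s) * M) ∧
        (∀ s i, ∑ a, w i a * c s i a + γ * ∑ a, ∑ j, w i a * P s a i j * v s j
          ≤ v s i)} := by
  set Up := Finset.univ.sup' Finset.univ_nonempty fun s => ∑ i, q i * vbar s i with hUp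
  set Low := Finset.univ.inf' Finset.univ_nonempty fun s => ∑ i, q i * vlow s i with hLow
  have hub : ∀ w : H → A → ℝ, (∀ i a, 0 ≤ w i a) → (∀ i, ∑ a, w i a = 1) →
      ∀ s, ∑ i, q i * val w s i ≤ Up := by
    intro w hw hw1 s
    refine le_trans (Finset.sum_le_sum fun i _ => mul_le_mul_of_nonneg_left ?_ (hq i))
      (Finset.le_sup' (fun s => ∑ i, q i * vbar s i) (Finset.mem_univ s))
    refine sub_le_super γ hγ0 hγ1 (c s) (P s) (hPnn s) (hProw s) w hw hw1 _ _
      (fun i => (hval w hw hw1 s i).le) (fun i => ?_) i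
    rw [policy_eval_eq]
    calc _ ≤ ∑ a, w i a * vbar s i := Finset.sum_le_sum fun a _ =>
          mul_le_mul_of_nonneg_left (by
            rw [hvbar s i]
            exact Finset.le_sup' (fun a => c s i a + γ * ∑ j, P s a i j * vbar s j)
              (Finset.mem_univ a)) (hw i a)
      _ = vbar s i := by rw [← Finset.sum_mul, hw1, one_mul]
  have hlb : ∀ w : H → A → ℝ, (∀ i a, 0 ≤ w i a) → (∀ i, ∑ a, w i a = 1) →
      ∀ s, Low ≤ ∑ i, q i * val w s i := by
    intro w hw hw1 s
    refine le_trans (Finset.inf'_le (fun s => ∑ i, q i * vlow s i) (Finset.mem_univ s))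
      (Finset.sum_le_sum fun i _ => mul_le_mul_of_nonneg_left ?_ (hq i))
    refine sub_le_super γ hγ0 hγ1 (c s) (P s) (hPnn s) (hProw s) w hw hw1 _ _
      (fun i => ?_) (fun i => (hval w hw hw1 s i).ge) i
    rw [policy_eval_eq]
    calc vlow s i = ∑ a, w i a * vlow s i := by rw [← Finset.sum_mul, hw1, one_mul]
      _ ≤ _ := Finset.sum_le_sum fun a _ =>
          mul_le_mul_of_nonneg_left (by
            rw [hvlow s i]
            exact Finset.inf'_le (fun a => c s i a + γ * ∑ j, P s a i j * vlow s j)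
              (Finset.mem_univ a)) (hw i a)
  -- Below `Low` no scenario is covered, while `α > 0`.
  have hlow : ∀ w : H → A → ℝ, (∀ i a, 0 ≤ w i a) → (∀ i, ∑ a, w i a = 1) →
      ∀ t, α ≤ (∑ s, if ∑ i, q i * val w s i ≤ t then p s else 0) → Low ≤ t := by
    intro w hw hw1 t ht
    by_contra hlt
    rw [Finset.sum_eq_zero fun s _ => if_neg fun h => hlt ((hlb w hw hw1 s).trans h)] at ht
    linarith
  -- At level `Up` every scenario is covered, and `α ≤ 1`.
  have hne : ∀ w : H → A → ℝ, (∀ i a, 0 ≤ w i a) → (∀ i, ∑ a, w i a = 1) →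
      {t : ℝ | α ≤ ∑ s, if ∑ i, q i * val w s i ≤ t then p s else 0}.Nonempty := by
    intro w hw hw1
    refine ⟨Up, ?_⟩
    rw [Set.mem_ofPred_eq, Finset.sum_congr rfl fun s _ => if_pos (hub w hw hw1 s), hp1]
    exact hα1
  have hVaR_le : ∀ w : H → A → ℝ, (∀ i a, 0 ≤ w i a) → (∀ i, ∑ a, w i a = 1) →
      ∀ t, α ≤ (∑ s, if ∑ i, q i * val w s i ≤ t then p s else 0) →
      VaR p α (fun s => ∑ i, q i * val w s i) ≤ t := by
    intro w hw hw1 t ht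
    exact csInf_le ⟨Low, fun t ht => hlow w hw hw1 t ht⟩ ht
  have hLow_VaR : ∀ w : H → A → ℝ, (∀ i a, 0 ≤ w i a) → (∀ i, ∑ a, w i a = 1) →
      Low ≤ VaR p α (fun s => ∑ i, q i * val w s i) := by
    intro w hw hw1
    exact le_csInf (hne w hw hw1) fun t ht => hlow w hw hw1 t ht
  -- A feasible `y` of the program satisfies the chance constraint for its policy.
  have hR : ∀ (y : ℝ) (w : H → A → ℝ) (z : S → ℝ) (v : S → H → ℝ),
      (∀ i a, 0 ≤ w i a) → (∀ i, ∑ a, w i a = 1) → (∀ s, z s = 0 ∨ z s = 1) →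
      α ≤ ∑ s, p s * z s → (∀ s, ∑ i, q i * v s i ≤ y + (1 - z s) * M) →
      (∀ s i, ∑ a, w i a * c s i a + γ * ∑ a, ∑ j, w i a * P s a i j * v s j ≤ v s i) →
      α ≤ ∑ s, if ∑ i, q i * val w s i ≤ y then p s else 0 := by
    intro y w z v hw hw1 hz hαz hy hv
    refine hαz.trans (Finset.sum_le_sum fun s _ => ?_)
    rcases hz s with h0 | h1
    · rw [h0, mul_zero]
      split_ifs
      exacts [(hp s).le, le_rfl]
    · have hX : ∑ i, q i * val w s i ≤ y := by
        have h2 := hy s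
        rw [h1, sub_self, zero_mul, add_zero] at h2
        refine le_trans (Finset.sum_le_sum fun i _ => mul_le_mul_of_nonneg_left ?_ (hq i)) h2
        exact sub_le_super γ hγ0 hγ1 (c s) (P s) (hPnn s) (hProw s) w hw hw1 _ _
          (fun i => (hval w hw hw1 s i).le) (hv s) i
      rw [if_pos hX, h1, mul_one]
  -- Conversely, a level satisfying the chance constraint is feasible for the program.
  have hL : ∀ w : H → A → ℝ, (∀ i a, 0 ≤ w i a) → (∀ i, ∑ a, w i a = 1) →
      ∀ t, α ≤ (∑ s, if ∑ i, q i * val w s i ≤ t then p s else 0) →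
      ∃ (w : H → A → ℝ) (z : S → ℝ) (v : S → H → ℝ),
        (∀ i a, 0 ≤ w i a) ∧ (∀ i, ∑ a, w i a = 1) ∧
        (∀ s, z s = 0 ∨ z s = 1) ∧
        α ≤ ∑ s, p s * z s ∧
        (∀ s, ∑ i, q i * v s i ≤ t + (1 - z s) * M) ∧
        (∀ s i, ∑ a, w i a * c s i a + γ * ∑ a, ∑ j, w i a * P s a i j * v s j
          ≤ v s i) := by
    intro w hw hw1 t ht
    refine ⟨w, fun s => if ∑ i, q i * val w s i ≤ t then 1 else 0, val w, hw, hw1, fun s => ?_,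
      ?_, fun s => ?_, fun s i => (hval w hw hw1 s i).ge⟩
    · dsimp only
      split_ifs <;> simp
    · simpa only [mul_ite, mul_one, mul_zero] using ht
    · dsimp only
      split_ifs with h
      · simpa using h
      · linarith [hub w hw hw1 s, hlow w hw hw1 t ht]
  classical
  obtain ⟨w₀, hw₀, hw₀1⟩ :
      ∃ w : H → A → ℝ, (∀ i a, 0 ≤ w i a) ∧ ∀ i, ∑ a, w i a = 1 := by
    obtain ⟨a₀⟩ := ‹Nonempty A›
    refine ⟨fun _ a => if a = a₀ then 1 else 0, fun _ a => ?_, fun _ => by simp⟩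
    dsimp only
    split_ifs <;> norm_num
  obtain ⟨t₀, ht₀⟩ := hne w₀ hw₀ hw₀1
  apply le_antisymm
  · refine le_csInf ⟨t₀, hL w₀ hw₀ hw₀1 t₀ ht₀⟩ ?_
    rintro y ⟨w, z, v, hw, hw1, hz, hαz, hy, hv⟩
    refine le_trans (b := VaR p α fun s => ∑ i, q i * val w s i)
      (csInf_le ⟨Low, ?_⟩ ⟨w, hw, hw1, rfl⟩)
      (hVaR_le w hw hw1 y (hR y w z v hw hw1 hz hαz hy hv))
    rintro _ ⟨w', hw', hw1', rfl⟩
    exact hLow_VaR w' hw' hw1'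
  · refine le_csInf ⟨_, w₀, hw₀, hw₀1, rfl⟩ ?_
    rintro _ ⟨w, hw, hw1, rfl⟩
    refine le_csInf (hne w hw hw1) fun t ht => csInf_le ⟨Low, ?_⟩ (hL w hw hw1 t ht)
    rintro y ⟨w', z, v, hw', hw1', hz, hαz, hy, hv⟩
    exact hlow w' hw' hw1' y (hR y w' z v hw' hw1' hz hαz hy hv)
end

section
/- (Proposition 2.) Fix nonempty finite sets H (states), A (actions) and S (scenarios), probabilities p : S → ℝ with p s > 0 and Σ_s p s = 1, a confidence level α ∈ (0,1], a discount factor γ ∈ [0,1), an initial distribution q : H → ℝ with q i ≥ 0 and Σ_i q i = 1, and for each scenario s costs c^s : H → A → ℝ and kernels P^s : A → H → H → ℝ with each P^s a row-stochastic. For a deterministic stationary policy π : H → A, let v^s(π) : H → ℝ denote the unique solution of v i = c^s i (π i) + γ Σ_j P^s (π i) i j · v j. Let v̄^s and v̲^s be the fixed points of the max- and min-Bellman operators of scenario s, and suppose M ≥ max_s Σ_i q i · v̄^s i − min_s Σ_i q i · v̲^s i. Then the optimal value of the chance-constrained problem min over deterministic policies π : H → A of VaR_α( s ↦ Σ_i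 q i · v^s(π) i ) equals the optimal value of the mixed-integer program QMDP-D: min of y over all (y ∈ ℝ, w : H → A → {0,1} with Σ_a w i a = 1 for each i, z : S → {0,1}, v : S → H → ℝ) such that Σ_s p s · z s ≥ α; Σ_i q i · v^s i ≤ y + (1 − z s)·M for all s; and v^s i ≥ Σ_a w i a · c^s i a + γ Σ_a Σ_j w i a · P^s a i j · v^s j for all i, s. -/
/-!
Write `X_π s = ∑ i, q i * val π s i` and `T_π = {t | α ≤ ℙ(X_π ≤ t)}`, so that `VaR X_π = inf T_π`.
The projection of the feasible set of the mixed-integer program on `y` is exactly `⋃ π, T_π`, and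
the infimum of a finite union is the least of the infima.

* A feasible point determines a policy `π` through `w`, and `v` is a supersolution of the policy
  equation, so `val π ≤ v` by the comparison principle `nonneg_of_discounted`. Hence `X_π s ≤ y`
  whenever `z s = 1`, and `y ∈ T_π`.
* If `t ∈ T_π`, take `v = val π` and let `z` be the indicator of `X_π ≤ t`. As `α > 0`, some `s'`
  satisfies `X_π s' ≤ t`; comparison with the Bellman fixed points gives
  `X_π s ≤ max q·vbar ≤ M + min q·vlow ≤ M + X_π s' ≤ M + t`, so the relaxed constraints hold.
-/

/-- Comparison principle for discounted stochastic matrices: evaluate at a minimiser of `d`. -/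
lemma nonneg_of_discounted {H : Type*} [Fintype H] [Nonempty H] {γ : ℝ} (hγ0 : 0 ≤ γ)
    (hγ1 : γ < 1) (Q : H → H → ℝ) (hQ : ∀ i j, 0 ≤ Q i j) (hQ1 : ∀ i, ∑ j, Q i j = 1)
    (d : H → ℝ) (hd : ∀ i, γ * ∑ j, Q i j * d j ≤ d i) (i : H) : 0 ≤ d i := by
  obtain ⟨k, hk⟩ := Finite.exists_min d
  have h1 : d k ≤ ∑ j, Q k j * d j := by
    calc d k = ∑ j, Q k j * d k := by rw [← Finset.sum_mul, hQ1, one_mul]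
      _ ≤ _ := Finset.sum_le_sum fun j _ => mul_le_mul_of_nonneg_left (hk j) (hQ k j)
  have h2 := mul_le_mul_of_nonneg_left h1 hγ0
  have h3 := hd k
  have h4 : 0 ≤ d k := by nlinarith
  exact h4.trans (hk i)

/-- A subsolution of a discounted affine fixed-point equation lies below any supersolution. -/
lemma sub_le_super_s19 {H : Type*} [Fintype H] [Nonempty H] {γ : ℝ} (hγ0 : 0 ≤ γ)
    (hγ1 : γ < 1) (Q : H → H → ℝ) (hQ : ∀ i j, 0 ≤ Q i j) (hQ1 : ∀ i, ∑ j, Q i j = 1)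
    (b u v : H → ℝ) (hu : ∀ i, u i ≤ b i + γ * ∑ j, Q i j * u j)
    (hv : ∀ i, b i + γ * ∑ j, Q i j * v j ≤ v i) (i : H) : u i ≤ v i := by
  have := nonneg_of_discounted hγ0 hγ1 Q hQ hQ1 (fun i => v i - u i) (fun i => by
    have h1 := hu i
    have h2 := hv i
    simp only [mul_sub, Finset.sum_sub_distrib]
    linarith) i
  linarith

/-- A binary matrix with unit row sums is the indicator of a policy. -/
lemma exists_policy {H A : Type*} [Fintype A] (w : H → A → ℝ)
    (hw : ∀ i a, w i a = 0 ∨ w i a = 1) (hw1 : ∀ i, ∑ a, w i a = 1) :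
    ∃ π : H → A, ∀ (i : H) (f : A → ℝ), ∑ a, w i a * f a = f (π i) := by
  classical
  have h : ∀ i, ∃ a, w i a = 1 := by
    intro i
    by_contra! hne
    have h0 : ∑ a, w i a = 0 :=
      Finset.sum_eq_zero fun a _ => (hw i a).resolve_right (hne a)
    rw [hw1] at h0
    exact one_ne_zero h0
  choose π hπ using h
  refine ⟨π, fun i f => ?_⟩
  have hz : ∀ a, a ≠ π i → w i a = 0 := by
    intro a ha
    have hs := hw1 i
    rw [← Finset.add_sum_erase _ _ (Finset.mem_univ (π i)), hπ] at hs
    have hs0 : ∑ x ∈ Finset.univ.erase (π i), w i x = 0 := by linarith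
    refine (Finset.sum_eq_zero_iff_of_nonneg fun x _ => ?_).1 hs0 a (by simp [ha])
    rcases hw i x with h | h <;> simp [h]
  rw [Finset.sum_eq_single (π i) (fun a _ ha => by simp [hz a ha]) (by simp), hπ, one_mul]

/-- The set defining `VaR` contains only levels that some scenario stays below, since `α > 0`. -/
lemma exists_le_of_level {S : Type*} [Fintype S] {p : S → ℝ} {α : ℝ} (hα0 : 0 < α)
    {X : S → ℝ} {t : ℝ} (ht : α ≤ ∑ s, if X s ≤ t then p s else 0) : ∃ s, X s ≤ t := by
  by_contra! h
  have : (∑ s, if X s ≤ t then p s else 0) = 0 :=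
    Finset.sum_eq_zero fun s _ => if_neg (not_le.2 (h s))
  linarith

/-- Proposition 2: assuming a finite representation of parameter
uncertainty and restricting attention to deterministic stationary policies, the
chance-constrained quantile-minimizing problem equals the mixed-integer program
QMDP-D (with binary policy variables `w`). -/
theorem stmt_19 {H A S : Type*} [Fintype H] [Nonempty H] [Fintype A] [Nonempty A]
    [Fintype S] [Nonempty S]
    (p : S → ℝ) (hp : ∀ s, 0 < p s) (hp1 : ∑ s, p s = 1)
    (α : ℝ) (hα0 : 0 < α) (hα1 : α ≤ 1)
    (γ : ℝ) (hγ0 : 0 ≤ γ) (hγ1 : γ < 1)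
    (q : H → ℝ) (hq : ∀ i, 0 ≤ q i) (hq1 : ∑ i, q i = 1)
    (c : S → H → A → ℝ) (P : S → A → H → H → ℝ)
    (hPnn : ∀ s a i j, 0 ≤ P s a i j) (hProw : ∀ s a i, ∑ j, P s a i j = 1)
    -- the value function of a deterministic stationary policy under each scenario
    (val : (H → A) → S → H → ℝ)
    (hval : ∀ (π : H → A) (s : S) (i : H), val π s i =
        c s i (π i) + γ * ∑ j, P s (π i) i j * val π s j)
    -- fixed points of the max- and min-Bellman operators of each scenario
    (vbar vlow : S → H → ℝ)
    (hvbar : ∀ s i, vbar s i = Finset.univ.sup' Finset.univ_nonempty fun a =>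
        c s i a + γ * ∑ j, P s a i j * vbar s j)
    (hvlow : ∀ s i, vlow s i = Finset.univ.inf' Finset.univ_nonempty fun a =>
        c s i a + γ * ∑ j, P s a i j * vlow s j)
    (M : ℝ)
    (hM : (Finset.univ.sup' Finset.univ_nonempty fun s => ∑ i, q i * vbar s i) -
          (Finset.univ.inf' Finset.univ_nonempty fun s => ∑ i, q i * vlow s i) ≤ M) :
    sInf {y : ℝ | ∃ π : H → A, y = VaR p α fun s => ∑ i, q i * val π s i} =
    sInf {y : ℝ | ∃ (w : H → A → ℝ) (z : S → ℝ) (v : S → H → ℝ),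
        (∀ i a, w i a = 0 ∨ w i a = 1) ∧ (∀ i, ∑ a, w i a = 1) ∧
        (∀ s, z s = 0 ∨ z s = 1) ∧
        α ≤ ∑ s, p s * z s ∧
        (∀ s, ∑ i, q i * v s i ≤ y + (1 - z s) * M) ∧
        (∀ s i, ∑ a, w i a * c s i a + γ * ∑ a, ∑ j, w i a * P s a i j * v s j
          ≤ v s i)} := by
  classical
  set X : (H → A) → S → ℝ := fun π s => ∑ i, q i * val π s i with hX
  set T : (H → A) → Set ℝ := fun π => {t : ℝ | α ≤ ∑ s, if X π s ≤ t then p s else 0} with hT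
  have hTne : ∀ π, (T π).Nonempty := by
    intro π
    obtain ⟨k, hk⟩ := Finite.exists_max (X π)
    refine ⟨X π k, ?_⟩
    simp [hT, hk, hp1, hα1]
  have hTbdd : ∀ π, BddBelow (T π) := by
    intro π
    obtain ⟨k, hk⟩ := Finite.exists_min (X π)
    refine ⟨X π k, fun t ht => ?_⟩
    obtain ⟨s, hs⟩ := exists_le_of_level hα0 ht
    exact (hk s).trans hs
  have hvalbar : ∀ π s i, val π s i ≤ vbar s i := by
    intro π s
    refine sub_le_super_s19 hγ0 hγ1 (fun i j => P s (π i) i j) (fun i j => hPnn _ _ _ _)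
      (fun i => hProw _ _ _) (fun i => c s i (π i)) _ _ (fun i => (hval π s i).le) (fun i => ?_)
    rw [hvbar s i]
    exact Finset.le_sup' (fun a => c s i a + γ * ∑ j, P s a i j * vbar s j)
      (Finset.mem_univ (π i))
  have hvallow : ∀ π s i, vlow s i ≤ val π s i := by
    intro π s
    refine sub_le_super_s19 hγ0 hγ1 (fun i j => P s (π i) i j) (fun i j => hPnn _ _ _ _)
      (fun i => hProw _ _ _) (fun i => c s i (π i)) _ _ (fun i => ?_) (fun i => (hval π s i).ge)
    rw [hvlow s i]
    exact Finset.inf'_le (fun a => c s i a + γ * ∑ j, P s a i j * vlow s j)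
      (Finset.mem_univ (π i))
  have hq_mono : ∀ u v : H → ℝ, (∀ i, u i ≤ v i) → ∑ i, q i * u i ≤ ∑ i, q i * v i :=
    fun u v h => Finset.sum_le_sum fun i _ => mul_le_mul_of_nonneg_left (h i) (hq i)
  -- `M` bounds the spread of the scenario values of any policy.
  have hspread : ∀ π s s', X π s ≤ X π s' + M := by
    intro π s s'
    have h1 : X π s ≤ ∑ i, q i * vbar s i := hq_mono _ _ (hvalbar π s)
    have h2 : ∑ i, q i * vlow s' i ≤ X π s' := hq_mono _ _ (hvallow π s')
    have h3 := Finset.le_sup' (fun s => ∑ i, q i * vbar s i) (Finset.mem_univ s)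
    have h4 := Finset.inf'_le (fun s => ∑ i, q i * vlow s i) (Finset.mem_univ s')
    linarith
  set F : Set ℝ := {y : ℝ | ∃ (w : H → A → ℝ) (z : S → ℝ) (v : S → H → ℝ),
        (∀ i a, w i a = 0 ∨ w i a = 1) ∧ (∀ i, ∑ a, w i a = 1) ∧
        (∀ s, z s = 0 ∨ z s = 1) ∧
        α ≤ ∑ s, p s * z s ∧
        (∀ s, ∑ i, q i * v s i ≤ y + (1 - z s) * M) ∧
        (∀ s i, ∑ a, w i a * c s i a + γ * ∑ a, ∑ j, w i a * P s a i j * v s j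
          ≤ v s i)} with hF
  have hFT : ∀ y ∈ F, ∃ π, y ∈ T π := by
    rintro y ⟨w, z, v, hw, hw1, hz, hzα, hy, hv⟩
    obtain ⟨π, hπ⟩ := exists_policy w hw hw1
    have hle : ∀ s i, val π s i ≤ v s i := by
      intro s
      refine sub_le_super_s19 hγ0 hγ1 (fun i j => P s (π i) i j) (fun i j => hPnn _ _ _ _)
        (fun i => hProw _ _ _) (fun i => c s i (π i)) _ _ (fun i => (hval π s i).le) (fun i => ?_)
      have h := hv s i
      simp only [mul_assoc, ← Finset.mul_sum] at h
      rwa [hπ i, hπ i (fun a => ∑ j, P s a i j * v s j)] at h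
    refine ⟨π, hzα.trans (Finset.sum_le_sum fun s _ => ?_)⟩
    rcases hz s with h | h
    · rw [h, mul_zero]
      split_ifs
      exacts [(hp s).le, le_rfl]
    · have h1 := hy s
      rw [h, sub_self, zero_mul, add_zero] at h1
      rw [h, mul_one, if_pos ((hq_mono _ _ (hle s)).trans h1)]
  have hTF : ∀ π, ∀ t ∈ T π, t ∈ F := by
    intro π t ht
    obtain ⟨s', hs'⟩ := exists_le_of_level hα0 ht
    refine ⟨fun i a => if a = π i then 1 else 0, fun s => if X π s ≤ t then 1 else 0, val π,
      fun i a => ?_, fun i => by simp, fun s => ?_, ?_, fun s => ?_, fun s i => ?_⟩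
    · by_cases h : a = π i <;> simp [h]
    · by_cases h : X π s ≤ t <;> simp [h]
    · simp only [mul_ite, mul_one, mul_zero]
      exact ht
    · by_cases h : X π s ≤ t
      · simpa only [if_pos h, sub_self, zero_mul, add_zero] using h
      · simp only [if_neg h, sub_zero, one_mul]
        exact (hspread π s s').trans (by linarith)
    · simp only [mul_assoc, ← Finset.mul_sum]
      simpa using (hval π s i).ge
  have hGfin : {y : ℝ | ∃ π : H → A, y = VaR p α (X π)}.Finite := by
    refine (Set.finite_range fun π => VaR p α (X π)).subset ?_
    rintro y ⟨π, rfl⟩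
    exact ⟨π, rfl⟩
  have hFlb : ∀ y ∈ F, sInf {y : ℝ | ∃ π : H → A, y = VaR p α (X π)} ≤ y := by
    intro y hy
    obtain ⟨π, hπ⟩ := hFT y hy
    exact (csInf_le hGfin.bddBelow ⟨π, rfl⟩).trans (csInf_le (hTbdd π) hπ)
  obtain ⟨π₀⟩ : Nonempty (H → A) := inferInstance
  obtain ⟨t₀, ht₀⟩ := hTne π₀
  refine le_antisymm (le_csInf ⟨t₀, hTF π₀ t₀ ht₀⟩ hFlb) (le_csInf ⟨_, π₀, rfl⟩ ?_)
  rintro _ ⟨π, rfl⟩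
  exact le_csInf (hTne π) fun t ht => csInf_le ⟨_, hFlb⟩ (hTF π t ht)
end
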